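/- There exists a constant C > 0 such that for every v ∈ C_c^∞(ℝ³) and every r > 0, r^{1/2} ‖v(rω)‖_{L⁴(S², dS_ω)} ≤ C ‖∇v‖_{L²(ℝ³)}. -/

import Mathlib

/-!
For `ω` on the unit sphere and `r > 0`, compact support gives
`v(rω)⁴ = -∫_r^∞ ∂_s (v(sω)⁴) ds ≤ 4 ∫_r^∞ |v(sω)|³ |∇v(sω)| ds` (`radial_bound`).
Multiplying by `r² ≤ s²`, integrating over the sphere and using polar coordinates
(`lintegral_polar`) yields `r² ‖v(r·)‖₄⁴ ≤ 4 ∫ |v|³ |∇v| dx` (`sphere_bound`). By Cauchy–Schwarz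
and the Sobolev inequality `‖v‖₆ ≤ K ‖∇v‖₂` the right side is at most `4 K³ ‖∇v‖₂⁴`
(`sobolev_holder`), and the theorem follows by taking fourth roots.
-/

open MeasureTheory Real ENNReal FourierTransform
open scoped ContDiff

noncomputable section

/-- Euclidean space ℝⁿ. -/
abbrev Spc (n : ℕ) := EuclideanSpace ℝ (Fin n)

/-- Space-time ℝ × ℝⁿ. -/
abbrev STn (n : ℕ) := ℝ × Spc n

variable {n : ℕ}

/-- Directional derivative in the space-time direction `v`. -/
def dirD (v : STn n) (f : STn n → ℝ) : STn n → ℝ := fun p => fderiv ℝ f p v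

/-- Time derivative ∂_t. -/
def dtD : (STn n → ℝ) → STn n → ℝ := dirD (1, 0)

/-- Spatial derivative ∂_j. -/
def dxD (j : Fin n) : (STn n → ℝ) → STn n → ℝ := dirD (0, EuclideanSpace.single j 1)

/-- Spatial Laplacian. -/
def lapD (f : STn n → ℝ) : STn n → ℝ := fun p => ∑ j, dxD j (dxD j f) p

/-- d'Alembertian □ = ∂_t² − Δ. -/
def boxD (f : STn n → ℝ) : STn n → ℝ := fun p => dtD (dtD f) p - lapD f p

/-- Lorentz boost L_j = t ∂_j + x_j ∂_t. -/
def LD (j : Fin n) (f : STn n → ℝ) : STn n → ℝ := fun p => p.1 * dxD j f p + p.2 j * dtD f p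

/-- Rotation Ω_{jk} = x_j ∂_k − x_k ∂_j. -/
def RotD (j k : Fin n) (f : STn n → ℝ) : STn n → ℝ := fun p => p.2 j * dxD k f p - p.2 k * dxD j f p

/-- Scaling S = t ∂_t + x·∇. -/
def SD (f : STn n → ℝ) : STn n → ℝ := fun p => p.1 * dtD f p + ∑ j, p.2 j * dxD j f p

/-- Index type for the Klainerman vector fields. -/
def GIdx (n : ℕ) := Option (Fin n) ⊕ Fin n ⊕ (Fin n × Fin n) ⊕ Unit

instance : Fintype (GIdx n) := by unfold GIdx; infer_instance
instance : DecidableEq (GIdx n) := by unfold GIdx; infer_instance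

/-- The Klainerman vector field with index `i`. -/
def Gop : GIdx n → (STn n → ℝ) → STn n → ℝ
  | Sum.inl none => dtD
  | Sum.inl (some j) => dxD j
  | Sum.inr (Sum.inl j) => LD j
  | Sum.inr (Sum.inr (Sum.inl jk)) => RotD jk.1 jk.2
  | Sum.inr (Sum.inr (Sum.inr _)) => SD

/-- Iterated composition Γ^α along a word of indices. -/
def GwL : List (GIdx n) → (STn n → ℝ) → STn n → ℝ
  | [], f => f
  | a :: l, f => Gop a (GwL l f)

/-- Sum of a quantity over all products of at most `N` Klainerman vector fields. -/
def SumW (N : ℕ) (Φ : (STn n → ℝ) → ℝ≥0∞) (f : STn n → ℝ) : ℝ≥0∞ :=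
  ∑ m ∈ Finset.range (N + 1), ∑ w : Fin m → GIdx n, Φ (GwL (List.ofFn w) f)

/-- Pointwise norm of the full space-time gradient ∂u = (∂_t u, ∇_x u). -/
def gradN (f : STn n → ℝ) (p : STn n) : ℝ := Real.sqrt ((dtD f p) ^ 2 + ∑ j, (dxD j f p) ^ 2)

/-- Fourier transform (in space) of a real valued function. -/
def fourierS (g : Spc n → ℝ) : Spc n → ℂ := 𝓕 (fun x => (g x : ℂ))

/-- ‖ |D|^s g ‖_{L²}, i.e. the L² norm of ξ ↦ |ξ|^s (ℱ g)(ξ). -/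
def DsN (s : ℝ) (g : Spc n → ℝ) : ℝ≥0∞ :=
  eLpNorm (fun ξ : Spc n => ‖ξ‖ ^ s * ‖fourierS g ξ‖) 2 volume

/-- The surface measure on the unit sphere of ℝⁿ. -/
def sphM (n : ℕ) : Measure (Metric.sphere (0 : Spc n) 1) := (volume : Measure (Spc n)).toSphere

/-- The L^q norm of g(r ω) over the unit sphere. -/
def sphN (n : ℕ) (q : ℝ) (g : Spc n → ℝ) (r : ℝ) : ℝ≥0∞ :=
  (∫⁻ o, (‖g (r • (o : Spc n))‖₊ : ℝ≥0∞) ^ q ∂(sphM n)) ^ (1 / q)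

/-- The mixed norm ‖g‖_{p,q} = (∫_0^∞ ‖g(r·)‖_{L^q(S^{n-1})}^p r^{n-1} dr)^{1/p}. -/
def mixN (n : ℕ) (p q : ℝ) (g : Spc n → ℝ) : ℝ≥0∞ :=
  (∫⁻ r in Set.Ioi (0 : ℝ), (sphN n q g r) ^ p * ENNReal.ofReal (r ^ (n - 1))) ^ (1 / p)

/-- A space-time function which is Schwartz in the space variable for each fixed time. -/
def SchwartzInX (v : STn n → ℝ) : Prop :=
  ∀ t : ℝ, ∃ φ : SchwartzMap (Spc n) ℝ, ∀ x, v (t, x) = φ x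

/-- The space-time partial derivatives ∂_0 = ∂_t, ∂_j (j = 1,2,3) on ℝ × ℝ³. -/
def pd4 (α : Fin 4) : (STn 3 → ℝ) → STn 3 → ℝ := Fin.cases dtD (fun j => dxD j) α

/-- The null condition for a set of coefficients {A^{αβ}}. -/
def NullCond (A : Fin 4 → Fin 4 → ℝ) : Prop :=
  ∀ X : Fin 4 → ℝ, (X 0) ^ 2 = (X 1) ^ 2 + (X 2) ^ 2 + (X 3) ^ 2 →
    ∑ α, ∑ β, A α β * X α * X β = 0

/-- The null form A^{αβ} (∂_α v)(∂_β w). -/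
def QF (A : Fin 4 → Fin 4 → ℝ) (v w : STn 3 → ℝ) (p : STn 3) : ℝ :=
  ∑ α, ∑ β, A α β * pd4 α v p * pd4 β w p

/-- The good derivative T_j = ∂_j + (x_j/|x|) ∂_t. -/
def TD (j : Fin 3) (f : STn 3 → ℝ) (p : STn 3) : ℝ := dxD j f p + (p.2 j / ‖p.2‖) * dtD f p

end

/-- The fundamental theorem of calculus for `v ^ 4` along the outward ray through `o`, starting at
`r`: the boundary term at infinity vanishes by compact support. -/
lemma radial_bound (v : Spc 3 → ℝ) (hv : ContDiff ℝ 1 v) (hc : HasCompactSupport v)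
    (o : Metric.sphere (0 : Spc 3) 1) (r : ℝ) :
    ‖v (r • (o : Spc 3))‖ₑ ^ 4 ≤
      ∫⁻ s in Set.Ioi r, 4 * (‖v (s • (o : Spc 3))‖ₑ ^ 3 * ‖fderiv ℝ v (s • (o : Spc 3))‖ₑ) := by
  have ho : ‖(o : Spc 3)‖ = 1 := by simp
  have ho0 : (o : Spc 3) ≠ 0 := by
    intro h; rw [h] at ho; simp at ho
  -- The ray is parametrised backwards so that the bound by an integral over a left half-line applies
  let f : ℝ → ℝ := fun s => v ((-s) • (o : Spc 3)) ^ 4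
  have hf : ContDiff ℝ 1 f := by
    apply ContDiff.pow
    exact hv.comp (by fun_prop)
  have hcf : HasCompactSupport f := by
    have h1 : HasCompactSupport (fun s : ℝ => v ((-s) • (o : Spc 3))) := by
      have := hc.comp_isClosedEmbedding
        ((isClosedEmbedding_smul_left (𝕜 := ℝ) ho0).comp (Homeomorph.neg ℝ).isClosedEmbedding)
      exact this
    exact h1.comp_left (g := fun x => x ^ 4) (by simp)
  have hd : ∀ s, ‖deriv f s‖ₑ ≤
      4 * (‖v ((-s) • (o : Spc 3))‖ₑ ^ 3 * ‖fderiv ℝ v ((-s) • (o : Spc 3))‖ₑ) := by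
    intro s
    have h1 : HasDerivAt (fun s : ℝ => (-s) • (o : Spc 3)) ((-1 : ℝ) • (o : Spc 3)) s :=
      (hasDerivAt_id s).neg.smul_const _
    have h2 := ((hv.differentiable one_ne_zero) ((-s) • (o : Spc 3))).hasFDerivAt.comp_hasDerivAt s h1
    have h3 : deriv f s = _ := (h2.pow 4).deriv
    rw [h3]
    simp only [enorm_mul, enorm_pow, Function.comp]
    have h4 : ‖fderiv ℝ v ((-s) • (o : Spc 3)) ((-1 : ℝ) • (o : Spc 3))‖ₑ ≤
        ‖fderiv ℝ v ((-s) • (o : Spc 3))‖ₑ := by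
      refine (ContinuousLinearMap.le_opENorm _ _).trans ?_
      have : ‖((-1 : ℝ) • (o : Spc 3))‖ₑ = 1 := by
        rw [← ofReal_norm]; simp
      rw [this, mul_one]
    have h5 : ‖((4 : ℕ) : ℝ)‖ₑ = 4 := by
      rw [← ofReal_norm]; simp
    rw [h5, mul_assoc]
    gcongr
  have key := hcf.enorm_le_lintegral_Ici_deriv hf (-r)
  have e1 : ‖f (-r)‖ₑ = ‖v (r • (o : Spc 3))‖ₑ ^ 4 := by simp [f, enorm_pow]
  rw [e1] at key
  refine key.trans ((lintegral_mono hd).trans (le_of_eq ?_))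
  have hmp := (Measure.measurePreserving_neg (volume : Measure ℝ)).restrict_preimage
    (measurableSet_Ici (a := r))
  have := hmp.lintegral_comp_emb (Homeomorph.neg ℝ).measurableEmbedding
    (fun s => 4 * (‖v (s • (o : Spc 3))‖ₑ ^ 3 * ‖fderiv ℝ v (s • (o : Spc 3))‖ₑ))
  rw [restrict_Ioi_eq_restrict_Ici, ← this]
  simp

/-- Integration in polar coordinates on `ℝ³`. -/
lemma lintegral_polar (F : Spc 3 → ℝ≥0∞) (hF : Measurable F) :
    ∫⁻ x, F x = ∫⁻ o, (∫⁻ s in Set.Ioi (0 : ℝ),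
      ENNReal.ofReal (s ^ 2) * F (s • (o : Spc 3))) ∂(sphM 3) := by
  have hmp := (volume : Measure (Spc 3)).measurePreserving_homeomorphUnitSphereProd
  have h1 : ∫⁻ x, F x = ∫⁻ x : ({0}ᶜ : Set (Spc 3)), F x ∂(Measure.comap Subtype.val volume) := by
    rw [lintegral_subtype_comap (measurableSet_singleton _).compl, restrict_compl_singleton]
  have h2 := hmp.lintegral_comp_emb (Homeomorph.measurableEmbedding _)
    (fun p => F ((p.2 : ℝ) • (p.1 : Spc 3)))
  have h3 : ∀ x : ({0}ᶜ : Set (Spc 3)), F ((((homeomorphUnitSphereProd (Spc 3)) x).2 : ℝ) •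
      (((homeomorphUnitSphereProd (Spc 3)) x).1 : Spc 3)) = F x := by
    intro x
    have hx : ‖(x : Spc 3)‖ ≠ 0 := norm_ne_zero_iff.2 x.2
    simp [smul_smul, hx]
  simp only [h3] at h2
  have hm : Measurable fun p : Metric.sphere (0 : Spc 3) 1 × Set.Ioi (0 : ℝ) =>
      F ((p.2 : ℝ) • (p.1 : Spc 3)) := by fun_prop
  rw [h1, h2, lintegral_prod _ hm.aemeasurable]
  unfold sphM
  refine lintegral_congr fun o => ?_
  have hd : Module.finrank ℝ (Spc 3) - 1 = 2 := by simp
  rw [hd, Measure.volumeIoiPow, lintegral_withDensity_eq_lintegral_mul _ (by fun_prop) (by fun_prop)]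
  exact lintegral_subtype_comap measurableSet_Ioi
    (fun s : ℝ => ENNReal.ofReal (s ^ 2) * F (s • (o : Spc 3)))

/-- Cauchy–Schwarz bounds the left side by `‖v‖₆³ ‖∇v‖₂`; the Sobolev inequality
`‖v‖₆ ≤ K ‖∇v‖₂` on `ℝ³` then gives the claim. -/
lemma sobolev_holder : ∃ K : NNReal, ∀ v : Spc 3 → ℝ, ContDiff ℝ 1 v → HasCompactSupport v →
    ∫⁻ x, ‖v x‖ₑ ^ 3 * ‖fderiv ℝ v x‖ₑ ≤
      (K : ℝ≥0∞) ^ 3 * eLpNorm (fun x : Spc 3 => ‖fderiv ℝ v x‖) 2 volume ^ 4 := by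
  refine ⟨SNormLESNormFDerivOfEqConst ℝ (volume : Measure (Spc 3)) 2, fun v hv hc => ?_⟩
  set K := SNormLESNormFDerivOfEqConst ℝ (volume : Measure (Spc 3)) 2
  have hS := eLpNorm_le_eLpNorm_fderiv_of_eq (volume : Measure (Spc 3)) hv hc (p := 2) (p' := 6)
    (by norm_num) (by simp) (by simp; norm_num)
  have hmv : Measurable v := hv.continuous.measurable
  have hmd : Measurable fun x => ‖fderiv ℝ v x‖ₑ :=
    (hv.continuous_fderiv one_ne_zero).enorm.measurable
  have hH := ENNReal.lintegral_mul_le_Lp_mul_Lq (volume : Measure (Spc 3))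
    Real.HolderConjugate.two_two (f := fun x => ‖v x‖ₑ ^ 3) (g := fun x => ‖fderiv ℝ v x‖ₑ)
    (by fun_prop) hmd.aemeasurable
  have e6 : (∫⁻ x, (‖v x‖ₑ ^ 3) ^ (2 : ℝ)) ^ (1 / 2 : ℝ) = eLpNorm v 6 volume ^ 3 := by
    rw [eLpNorm_eq_lintegral_rpow_enorm_toReal (by norm_num) (by norm_num)]
    simp only [← ENNReal.rpow_natCast, ← ENNReal.rpow_mul]
    norm_num
  have e2 : (∫⁻ x, ‖fderiv ℝ v x‖ₑ ^ (2 : ℝ)) ^ (1 / 2 : ℝ) = eLpNorm (fderiv ℝ v) 2 volume := by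
    rw [eLpNorm_eq_lintegral_rpow_enorm_toReal (by norm_num) (by norm_num)]
    norm_num
  rw [eLpNorm_norm]
  calc _ ≤ _ := hH
    _ = eLpNorm v 6 volume ^ 3 * eLpNorm (fderiv ℝ v) 2 volume := by rw [e6, e2]
    _ ≤ (K * eLpNorm (fderiv ℝ v) 2 volume) ^ 3 * eLpNorm (fderiv ℝ v) 2 volume := by
        gcongr; exact hS
    _ = _ := by ring

/-- The radial bound, integrated over the sphere. Since `r ≤ s` on the domain of the radial integral,
the weight `r ^ 2` is dominated by the polar Jacobian `s ^ 2`. -/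
lemma sphere_bound (v : Spc 3 → ℝ) (hv : ContDiff ℝ 1 v) (hc : HasCompactSupport v)
    (r : ℝ) (hr : 0 < r) :
    ENNReal.ofReal (r ^ 2) * ∫⁻ o, ‖v (r • (o : Spc 3))‖ₑ ^ 4 ∂(sphM 3) ≤
      4 * ∫⁻ x, ‖v x‖ₑ ^ 3 * ‖fderiv ℝ v x‖ₑ := by
  have hmv : Measurable v := hv.continuous.measurable
  have hmd : Measurable fun x => ‖fderiv ℝ v x‖ₑ :=
    (hv.continuous_fderiv one_ne_zero).enorm.measurable
  rw [← lintegral_const_mul' _ _ (by norm_num), ← lintegral_const_mul' _ _ (by simp),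
    lintegral_polar _ (by fun_prop)]
  refine lintegral_mono fun o => ?_
  calc _ ≤ _ := mul_le_mul_right (radial_bound v hv hc o r) (ENNReal.ofReal (r ^ 2))
    _ = ∫⁻ s in Set.Ioi r, ENNReal.ofReal (r ^ 2) *
        (4 * (‖v (s • (o : Spc 3))‖ₑ ^ 3 * ‖fderiv ℝ v (s • (o : Spc 3))‖ₑ)) := by
        exact (lintegral_const_mul' _ _ (by simp)).symm
    _ ≤ ∫⁻ s in Set.Ioi r, ENNReal.ofReal (s ^ 2) *
        (4 * (‖v (s • (o : Spc 3))‖ₑ ^ 3 * ‖fderiv ℝ v (s • (o : Spc 3))‖ₑ)) := by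
        refine setLIntegral_mono' measurableSet_Ioi fun s hs => ?_
        have : r < s := hs
        gcongr
    _ ≤ _ := lintegral_mono_set (Set.Ioi_subset_Ioi hr.le)

/-- The trace-type inequality (3.24) of Lemma 3.4 (i). -/
theorem trace_inequality_L4 :
    ∃ C > (0 : ℝ), ∀ v : Spc 3 → ℝ, ContDiff ℝ ∞ v → HasCompactSupport v →
      ∀ r : ℝ, 0 < r →
        ENNReal.ofReal (r ^ (1/2 : ℝ)) * sphN 3 4 v r ≤
          ENNReal.ofReal C * eLpNorm (fun x : Spc 3 => ‖fderiv ℝ v x‖) 2 volume := by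
  obtain ⟨K, hK⟩ := sobolev_holder
  -- The summand `1` keeps the constant positive even if `K = 0`.
  refine ⟨(4 * (K : ℝ) ^ 3 + 1) ^ (1 / 4 : ℝ), by positivity, fun v hv hc r hr => ?_⟩
  have hv1 : ContDiff ℝ 1 v := hv.of_le (by norm_cast)
  set G := eLpNorm (fun x : Spc 3 => ‖fderiv ℝ v x‖) 2 volume
  have h1 := sphere_bound v hv1 hc r hr
  have h2 := hK v hv1 hc
  have hmain : ENNReal.ofReal (r ^ 2) * ∫⁻ o, ‖v (r • (o : Spc 3))‖ₑ ^ 4 ∂(sphM 3) ≤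
      ENNReal.ofReal (4 * (K : ℝ) ^ 3 + 1) * G ^ 4 := by
    calc _ ≤ _ := h1
      _ ≤ 4 * ((K : ℝ≥0∞) ^ 3 * G ^ 4) := by gcongr
      _ = ENNReal.ofReal (4 * (K : ℝ) ^ 3) * G ^ 4 := by
        rw [ENNReal.ofReal_mul (by norm_num), ENNReal.ofReal_pow (by simp),
          ENNReal.ofReal_coe_nnreal, mul_assoc]
        norm_num
      _ ≤ _ := by gcongr; linarith
  have h4 := ENNReal.rpow_le_rpow hmain (z := 1 / 4) (by norm_num)
  rw [ENNReal.mul_rpow_of_nonneg _ _ (by norm_num), ENNReal.mul_rpow_of_nonneg _ _ (by norm_num),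
    ENNReal.ofReal_rpow_of_nonneg (by positivity) (by norm_num),
    ENNReal.ofReal_rpow_of_nonneg (by positivity) (by norm_num)] at h4
  have er : (r ^ 2) ^ (1 / 4 : ℝ) = r ^ (1 / 2 : ℝ) := by
    rw [← Real.rpow_natCast, ← Real.rpow_mul hr.le]; norm_num
  have eG : (G ^ 4) ^ (1 / 4 : ℝ) = G := by
    rw [← ENNReal.rpow_natCast, ← ENNReal.rpow_mul]; norm_num
  have es : sphN 3 4 v r = (∫⁻ o, ‖v (r • (o : Spc 3))‖ₑ ^ 4 ∂(sphM 3)) ^ (1 / 4 : ℝ) := by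
    unfold sphN
    congr 2
    ext o
    rw [← enorm_eq_nnnorm, ← ENNReal.rpow_natCast]; norm_num
  rw [er, eG, ← es] at h4
  exact h4
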